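/- Let q, a, b, c, d be nonzero complex numbers, r, s ≥ 0 integers, e_1,…,e_r and f_1,…,f_s complex numbers, and n ≥ 0 an integer. For 0 ≤ k ≤ n set α_k = ((−1)^k q^{k(k−1)/2})^{s−r} and define A_k = (a−b)(a−c)(bc−d)(1−d) α_k α_{n−k+1} · (bc/a, bc q^{−2}, c, d/q; q)_k (e_1,…,e_r; q)_k (bc/a, bc, c, dq; q)_{n−k} (e_1 q,…,e_r q; q)_{n−k} / [(q, a/q, b/q, bc/d; q)_k (f_1,…,f_s; q)_k (q, aq, bq, bc/d; q)_{n−k} (f_1 q,…,f_s q; q)_{n−k}], B_k = (a−d)(1−b)(1−c)(bc−ad) α_k α_{n−k+1} · (bc/a, bc q^{−2}, c/q, d; q)_k (e_1,…,e_r; q)_k (bc/a, bc, cq, d; q)_{n−k} (e_1 q,…,e_r q; q)_{n−k} / [(q, a/q, b, bc/(dq); q)_k (f_1,…,f_s; q)_k (q, aq, b, bcq/d; q)_{n−k} (f_1 q,…,f_s q; q)_{n−k}], and C_k = (1−a)(b−d)(c−d)(a−bc) α_k α_{n−k+1} · (bc/(aq), bc q^{−2}, c, d; q)_k (e_1,…,e_r;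 q)_k (bcq/a, bc, c, d; q)_{n−k} (e_1 q,…,e_r q; q)_{n−k} / [(q, a, b/q, bc/(dq); q)_k (f_1,…,f_s; q)_k (q, a, bq, bcq/d; q)_{n−k} (f_1 q,…,f_s q; q)_{n−k}]. Assume every q-shifted factorial appearing in a denominator above is nonzero. Then Σ_{k=0}^{n} (A_k − B_k + C_k) = 0. (This is the coefficient-of-z^n form of the quadratic formula (a−b)(a−c)(bc−d)(1−d)·φ₁φ₂ = (a−d)(1−b)(1−c)(bc−ad)·φ₃φ₄ − (1−a)(b−d)(c−d)(a−bc)·φ₅φ₆ for the indicated ₍r+4₎φ₍s+3₎ series.) -/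

import Mathlib

/-!
The terms `T k = A k - B k + C k` cancel in pairs: `T 0 = 0` and `T k + T (n + 1 - k) = 0` for
`1 ≤ k ≤ n`.

Put `β = bc/a` and `g = bc/d`, so that `(a, β)`, `(b, c)`, `(d, g)` are three pairs with the same
product `P = bc`. For such a pair let `φ(x) = 1 - (sum) x + P x²`, the product of the two linear
factors `1 - u x`. Writing `k = j + 1`, `m = n - k`, `X = q^j`, `Y = q^m`, `p = 1/q` and pulling the
common q-shifted factorials out of `T k`, what is left is a combination of three products of values
of the `φ`s; it factors completely (`three_pairs`), with factors `X - Y`, `1 - q X` and `1 - P X / q`.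
The factor `1 - q X` cancels the one from `(q;q)_{j+1}`, and `1 - P X / q` turns `(P/q;q)_j` into a
multiple of `(P;q)_j`. Hence `T (j + 1) = Z (X - Y) (1 - P X Y) σ_j σ_m` with `Z` independent of `j`
(`generic_term`), which is antisymmetric in `j` and `m = n - 1 - j`.
-/

/-- The q-shifted factorial `(a;q)_n = ∏_{k=0}^{n-1} (1 - a q^k)`. -/
noncomputable def qPoch (q a : ℂ) (n : ℕ) : ℂ := ∏ k ∈ Finset.range n, (1 - a * q ^ k)

/-! ### q-shifted factorials -/

lemma qPoch_zero (q u : ℂ) : qPoch q u 0 = 1 := by simp [qPoch]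

lemma qPoch_succ (q u : ℂ) (j : ℕ) : qPoch q u (j + 1) = qPoch q u j * (1 - u * q ^ j) := by
  simp [qPoch, Finset.prod_range_succ]

lemma qPoch_succ_left (q u : ℂ) (j : ℕ) :
    qPoch q u (j + 1) = (1 - u) * qPoch q (u * q) j := by
  simp only [qPoch, Finset.prod_range_succ', pow_zero, mul_one]
  rw [mul_comm]
  congr 1
  exact Finset.prod_congr rfl fun k _ => by ring

lemma qPoch_div_succ {q : ℂ} (hq : q ≠ 0) (u : ℂ) (j : ℕ) :
    qPoch q (u / q) (j + 1) = (1 - u * q⁻¹) * qPoch q u j := by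
  rw [qPoch_succ_left, div_mul_cancel₀ _ hq, div_eq_mul_inv]

lemma qPoch_shift (q u : ℂ) (m : ℕ) :
    qPoch q (u * q) m * (1 - u) = qPoch q u m * (1 - u * q ^ m) := by
  rw [← qPoch_succ, qPoch_succ_left, mul_comm]

lemma qPoch_shift_eq {q u : ℂ} (hu : 1 - u ≠ 0) (m : ℕ) :
    qPoch q (u * q) m = qPoch q u m * (1 - u * q ^ m) / (1 - u) := by
  rw [eq_div_iff hu, qPoch_shift]

lemma one_sub_ne_zero_of_qPoch {q u : ℂ} {m n : ℕ} (h : qPoch q u n ≠ 0) (hmn : m < n) :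
    1 - u * q ^ m ≠ 0 := by
  unfold qPoch at h
  rw [Finset.prod_ne_zero_iff] at h
  exact h m (Finset.mem_range.2 hmn)

/-! ### The algebraic identities behind the cancellation -/

/-- In the notation `φᵢ(x) = 1 - sᵢ x + P x²`, the combination of values of the `φᵢ` that arises
from a generic term factors completely. -/
lemma three_pairs_sum (s₁ s₂ s₃ P p q X Y : ℂ) (hpq : p * q = 1) :
    -(s₁ - s₂) * (1 - s₃ * p + P * p ^ 2) * (1 - s₁ * X + P * X ^ 2) *
        (1 - s₂ * X + P * X ^ 2) * (1 - s₃ * Y + P * Y ^ 2)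
      - (s₃ - s₁) * (1 - s₂ * p + P * p ^ 2) * (1 - s₁ * X + P * X ^ 2) *
        (1 - s₃ * X + P * X ^ 2) * (1 - s₂ * Y + P * Y ^ 2)
      + (s₃ - s₂) * (1 - s₁ * p + P * p ^ 2) * (1 - s₂ * X + P * X ^ 2) *
        (1 - s₃ * X + P * X ^ 2) * (1 - s₁ * Y + P * Y ^ 2) =
    -(p * (s₃ - s₂) * (s₁ - s₂) * (s₁ - s₃)) * (1 - q * X) * (1 - P * p * X) * (X - Y) *
      (1 - P * (X * Y)) := by
  linear_combination (-(s₃ - s₂) * (s₁ - s₂) * (s₁ - s₃) * X * (1 - P * X * p) * (X - Y) *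
      (1 - P * X * Y)) * hpq

/-- `three_pairs_sum` for the pairs `(a, β)`, `(b, c)`, `(d, g)` of common product `bc`, with
differences of the sums expressed through the prefactors of the three series products. -/
lemma three_pairs (a b c d β g p q X Y : ℂ) (hβ : a * β = b * c) (hg : d * g = b * c)
    (hpq : p * q = 1) :
    (a - b) * (a - c) * (b * c - d) * (1 - d * p) * (1 - β * X) * (1 - c * X) * (1 - d * Y) *
        ((1 - g * p) * (1 - a * X) * (1 - b * X) * (1 - g * Y))
      - (1 - g) * ((b * c - a * d) * (a - d) * (1 - c * p) * (1 - c * Y) * (1 - β * X) *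
        (1 - d * X)) * ((1 - b * p) * (1 - a * X) * (1 - b * Y) * (1 - g * X))
      + (1 - g) * ((b - d) * (c - d) * a * (1 - β * p) * (1 - β * Y) * (1 - c * X) *
        (1 - d * X)) * ((1 - a * p) * (1 - a * Y) * (1 - b * X) * (1 - g * X)) =
    -(1 - g) * (a * d * p * (d + g - (b + c)) * (a + β - (b + c)) * (a + β - (d + g))) *
      (1 - q * X) * (1 - b * c * p * X) * (X - Y) * (1 - b * c * (X * Y)) := by
  have key := three_pairs_sum (a + β) (b + c) (d + g) (b * c) p q X Y hpq
  have h1 : ∀ x, 1 - (a + β) * x + b * c * x ^ 2 = (1 - a * x) * (1 - β * x) := fun x => by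
    linear_combination (-x ^ 2) * hβ
  have h2 : ∀ x, 1 - (b + c) * x + b * c * x ^ 2 = (1 - b * x) * (1 - c * x) := fun x => by ring
  have h3 : ∀ x, 1 - (d + g) * x + b * c * x ^ 2 = (1 - d * x) * (1 - g * x) := fun x => by
    linear_combination (-x ^ 2) * hg
  simp only [h1, h2, h3] at key
  have e1 : (a - b) * (a - c) * (b * c - d) = -(1 - g) * (a * d * (a + β - (b + c))) := by
    linear_combination (-d * (g - 1)) * hβ - (a - b) * (a - c) * hg
  have e2 : (b * c - a * d) * (a - d) = a * d * (d + g - (a + β)) := by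
    linear_combination d * hβ - a * hg
  have e3 : (b - d) * (c - d) * a = a * d * (d + g - (b + c)) := by
    linear_combination (-a) * hg
  rw [e1, e2, e3]
  generalize 1 - a * p = ap, 1 - a * X = aX, 1 - a * Y = aY, 1 - β * p = βp, 1 - β * X = βX,
    1 - β * Y = βY at key ⊢
  generalize 1 - b * p = bp, 1 - b * X = bX, 1 - b * Y = bY, 1 - c * p = cp, 1 - c * X = cX,
    1 - c * Y = cY at key ⊢
  generalize 1 - d * p = dp, 1 - d * X = dX, 1 - d * Y = dY, 1 - g * p = gp, 1 - g * X = gX,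
    1 - g * Y = gY at key ⊢
  generalize 1 - q * X = qX, 1 - b * c * p * X = nX, 1 - b * c * (X * Y) = S, X - Y = D,
    d + g - (b + c) = s₃₂, a + β - (b + c) = s₁₂ at key ⊢
  -- orient `s₃ - s₁` in the same way in all its occurrences
  have hs : ∀ u v : ℂ, u - v = -(v - u) := fun u v => by ring
  rw [hs (d + g)] at key ⊢
  generalize a + β - (d + g) = s₁₃, 1 - g = g1 at key ⊢
  linear_combination g1 * (a * d) * key

/-! ### Pulling out the common q-shifted factorials

In the first five lemmas and the two rearrangements before the final section, every factor is an
independent variable; a name such as `aX` stands for `1 - a * X`, `ap` for `1 - a / q`, and `a1` for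
`1 - a`. -/

/-- Here `W` collects the `α`, `e` and `f` factors, and `v` stands for `(dq;q)_m`. The lemmas
`termB_frac` and `termC_frac` treat `B` and `C` in the same way, with `v` standing for `(cq;q)_m` and
`(βq;q)_m`, and extract the same common factor. -/
lemma termA_frac (pre W Bj Bm N Pm cj cm dj dm Qj Qm aj am bj bm gj gm v w K
    βX cX dp dY qX ap bp aY bY gX a1 b1 : ℂ) (hv : v * w = dm * dY) :
    pre * w * W * ((Bj * βX) * (K * N) * (cj * cX) * (dp * dj) * (Bm * Pm * cm * v)) /
        ((Qj * qX) * (ap * aj) * (bp * bj) * (gj * gX) *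
          (Qm * (am * aY / a1) * (bm * bY / b1) * gm)) =
      W * (Bj * Bm * N * Pm * cj * cm * dj * dm) * K * (a1 * b1) /
        (Qj * Qm * aj * am * bj * bm * gj * gm * qX) *
      (pre * dp * βX * cX * dY / (ap * bp * aY * bY * gX)) := by
  trans pre * W * ((Bj * βX) * (K * N) * (cj * cX) * (dp * dj) * (Bm * Pm * cm)) * (v * w) /
        ((Qj * qX) * (ap * aj) * (bp * bj) * (gj * gX) *
          (Qm * (am * aY / a1) * (bm * bY / b1) * gm))
  · ring
  · rw [hv]
    simp only [div_eq_mul_inv, mul_inv, inv_inv]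
    ring

lemma termB_frac (p1 p2 W Bj Bm N Pm cj cm dj dm Qj Qm aj am bj bm gj gm v w K
    βX dX cp cY qX ap gp aY bX gY a1 b1 g1 : ℂ) (hv : v * w = cm * cY) :
    p1 * b1 * w * p2 * W * ((Bj * βX) * (K * N) * (cp * cj) * (dj * dX) * (Bm * Pm * v * dm)) /
        ((Qj * qX) * (ap * aj) * (bj * bX) * (gp * gj) *
          (Qm * (am * aY / a1) * bm * (gm * gY / g1))) =
      W * (Bj * Bm * N * Pm * cj * cm * dj * dm) * K * (a1 * b1) /
        (Qj * Qm * aj * am * bj * bm * gj * gm * qX) *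
      (g1 * (p2 * p1 * cp * cY * βX * dX) / (ap * gp * aY * bX * gY)) := by
  trans p1 * b1 * p2 * W * ((Bj * βX) * (K * N) * (cp * cj) * (dj * dX) * (Bm * Pm * dm)) *
        (v * w) /
        ((Qj * qX) * (ap * aj) * (bj * bX) * (gp * gj) *
          (Qm * (am * aY / a1) * bm * (gm * gY / g1)))
  · ring
  · rw [hv]
    simp only [div_eq_mul_inv, mul_inv, inv_inv]
    ring

lemma termC_frac (a p1 p2 W Bj Bm N Pm cj cm dj dm Qj Qm aj am bj bm gj gm v w K
    βp βY cX dX qX bp gp aX bY gY a1 b1 g1 : ℂ) (hv : v * w = Bm * βY) :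
    a1 * p1 * p2 * (a * w) * W *
        ((βp * Bj) * (K * N) * (cj * cX) * (dj * dX) * (v * Pm * cm * dm)) /
        ((Qj * qX) * (aj * aX) * (bp * bj) * (gp * gj) *
          (Qm * am * (bm * bY / b1) * (gm * gY / g1))) =
      W * (Bj * Bm * N * Pm * cj * cm * dj * dm) * K * (a1 * b1) /
        (Qj * Qm * aj * am * bj * bm * gj * gm * qX) *
      (g1 * (p1 * p2 * a * βp * βY * cX * dX) / (bp * gp * aX * bY * gY)) := by
  trans a1 * p1 * p2 * a * W * ((βp * Bj) * (K * N) * (cj * cX) * (dj * dX) * (Pm * cm * dm)) *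
        (v * w) /
        ((Qj * qX) * (aj * aX) * (bp * bj) * (gp * gj) *
          (Qm * am * (bm * bY / b1) * (gm * gY / g1)))
  · ring
  · rw [hv]
    simp only [div_eq_mul_inv, mul_inv, inv_inv]
    ring

lemma common_denominator (x y z ap bp gp aX aY bX bY gX gY : ℂ)
    (hap : ap ≠ 0) (hbp : bp ≠ 0) (hgp : gp ≠ 0) (haX : aX ≠ 0) (hbX : bX ≠ 0) (hgX : gX ≠ 0)
    (haY : aY ≠ 0) (hbY : bY ≠ 0) (hgY : gY ≠ 0) :
    x / (ap * bp * aY * bY * gX) - y / (ap * gp * aY * bX * gY) + z / (bp * gp * aX * bY * gY) =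
    (x * (gp * aX * bX * gY) - y * (bp * aX * bY * gX) + z * (ap * aY * bX * gX)) /
    ((ap * bp * gp) * (aX * aY * bX * bY * gX * gY)) := by
  field_simp

/-- The step where `1 - q X` cancels and `nX = 1 - P X / q` turns `(P/q;q)_j` into `(P;q)_j`. -/
lemma cancel_frac (W Bj Bm N Pj Pm cj cm dj dm Qj Qm aj am bj bm gj gm K K' nX U D S qX
    ap bp gp aX aY bX bY gX gY a1 b1 g1 : ℂ) (hN : N * nX = K' * Pj) (hqX : qX ≠ 0) :
    W * (Bj * Bm * N * Pm * cj * cm * dj * dm) * K * (a1 * b1) /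
        (Qj * Qm * aj * am * bj * bm * gj * gm * qX) *
      (-g1 * U * qX * nX * D * S / ((ap * bp * gp) * (aX * aY * bX * bY * gX * gY))) =
    -U * a1 * b1 * g1 * K * K' / (ap * bp * gp) * D * S * W *
      (Bj * Bm * Pj * Pm * cj * cm * dj * dm) /
      (Qj * Qm * (aj * aX) * (am * aY) * (bj * bX) * (bm * bY) * (gj * gX) * (gm * gY)) := by
  trans W * (Bj * Bm * Pm * cj * cm * dj * dm) * K * (a1 * b1) /
        (Qj * Qm * aj * am * bj * bm * gj * gm) * (N * nX) * (qX / qX) *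
      (-g1 * U * D * S / ((ap * bp * gp) * (aX * aY * bX * bY * gX * gY)))
  · ring
  · rw [hN, div_self hqX]
    ring

/-- The terms `T k` with `k = j + 1`, over arbitrary values of the factors: `Bj`, `Bm`, … stand for
`(β;q)_j`, `(β;q)_m`, …, and `N` for `(P/q;q)_j`. -/
lemma generic_term (a b c d β g p q X Y W Bj Bm N Pj Pm cj cm dj dm Qj Qm aj am bj bm gj gm
      cqm dqm βqm : ℂ)
    (hβ : a * β = b * c) (hg : d * g = b * c) (hpq : p * q = 1)
    (hN : N * (1 - b * c * p * X) = (1 - b * c * p) * Pj)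
    (hcq : cqm * (1 - c) = cm * (1 - c * Y)) (hdq : dqm * (1 - d) = dm * (1 - d * Y))
    (hβq : βqm * (1 - β) = Bm * (1 - β * Y))
    (hqX : 1 - q * X ≠ 0)
    (hap : 1 - a * p ≠ 0) (hbp : 1 - b * p ≠ 0) (hgp : 1 - g * p ≠ 0)
    (haX : 1 - a * X ≠ 0) (hbX : 1 - b * X ≠ 0) (hgX : 1 - g * X ≠ 0)
    (haY : 1 - a * Y ≠ 0) (hbY : 1 - b * Y ≠ 0) (hgY : 1 - g * Y ≠ 0) :
    (a - b) * (a - c) * (b * c - d) * (1 - d) * W *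
        ((Bj * (1 - β * X)) * ((1 - b * c * p ^ 2) * N) * (cj * (1 - c * X)) *
          ((1 - d * p) * dj) * (Bm * Pm * cm * dqm)) /
        ((Qj * (1 - q * X)) * ((1 - a * p) * aj) * ((1 - b * p) * bj) * (gj * (1 - g * X)) *
          (Qm * (am * (1 - a * Y) / (1 - a)) * (bm * (1 - b * Y) / (1 - b)) * gm))
      - (a - d) * (1 - b) * (1 - c) * (b * c - a * d) * W *
        ((Bj * (1 - β * X)) * ((1 - b * c * p ^ 2) * N) * ((1 - c * p) * cj) *
          (dj * (1 - d * X)) * (Bm * Pm * cqm * dm)) /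
        ((Qj * (1 - q * X)) * ((1 - a * p) * aj) * (bj * (1 - b * X)) * ((1 - g * p) * gj) *
          (Qm * (am * (1 - a * Y) / (1 - a)) * bm * (gm * (1 - g * Y) / (1 - g))))
      + (1 - a) * (b - d) * (c - d) * (a - b * c) * W *
        (((1 - β * p) * Bj) * ((1 - b * c * p ^ 2) * N) * (cj * (1 - c * X)) *
          (dj * (1 - d * X)) * (βqm * Pm * cm * dm)) /
        ((Qj * (1 - q * X)) * (aj * (1 - a * X)) * ((1 - b * p) * bj) * ((1 - g * p) * gj) *
          (Qm * am * (bm * (1 - b * Y) / (1 - b)) * (gm * (1 - g * Y) / (1 - g)))) =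
    -(a * d * p * (d + g - (b + c)) * (a + β - (b + c)) * (a + β - (d + g))) *
      (1 - a) * (1 - b) * (1 - g) * (1 - b * c * p ^ 2) * (1 - b * c * p) /
      ((1 - a * p) * (1 - b * p) * (1 - g * p)) * (X - Y) * (1 - b * c * (X * Y)) * W *
      (Bj * Bm * Pj * Pm * cj * cm * dj * dm) /
      (Qj * Qm * (aj * (1 - a * X)) * (am * (1 - a * Y)) * (bj * (1 - b * X)) *
        (bm * (1 - b * Y)) * (gj * (1 - g * X)) * (gm * (1 - g * Y))) := by
  have hpre : a - b * c = a * (1 - β) := by linear_combination hβ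
  rw [hpre, termA_frac (hv := hdq), termB_frac (hv := hcq), termC_frac (hv := hβq),
    ← mul_sub, ← mul_add, common_denominator (hap := hap) (hbp := hbp) (hgp := hgp) (haX := haX)
      (hbX := hbX) (hgX := hgX) (haY := haY) (hbY := hbY) (hgY := hgY)]
  have key := three_pairs a b c d β g p q X Y hβ hg hpq
  rw [key]
  exact cancel_frac (hN := hN) (hqX := hqX) ..

/-- `T 0 = 0`. The factorizations above are used with all `j`-dependent factors set to `1`; what is
left is a linear relation between the polynomials `φ(Y)` of the three pairs, the case `q X = 1` of
`three_pairs` after division by `φ(p)` of each pair. -/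
lemma zero_term (a b c d β g Y W Bm Pm cm dm Qm am bm gm cqm dqm βqm : ℂ)
    (hβ : a * β = b * c) (hg : d * g = b * c)
    (hcq : cqm * (1 - c) = cm * (1 - c * Y)) (hdq : dqm * (1 - d) = dm * (1 - d * Y))
    (hβq : βqm * (1 - β) = Bm * (1 - β * Y))
    (haY : 1 - a * Y ≠ 0) (hbY : 1 - b * Y ≠ 0) (hgY : 1 - g * Y ≠ 0) :
    (a - b) * (a - c) * (b * c - d) * (1 - d) * W *
        (1 * 1 * 1 * 1 * (Bm * Pm * cm * dqm)) /
        (1 * 1 * 1 * 1 *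
          (Qm * (am * (1 - a * Y) / (1 - a)) * (bm * (1 - b * Y) / (1 - b)) * gm))
      - (a - d) * (1 - b) * (1 - c) * (b * c - a * d) * W *
        (1 * 1 * 1 * 1 * (Bm * Pm * cqm * dm)) /
        (1 * 1 * 1 * 1 *
          (Qm * (am * (1 - a * Y) / (1 - a)) * bm * (gm * (1 - g * Y) / (1 - g))))
      + (1 - a) * (b - d) * (c - d) * (a - b * c) * W *
        (1 * 1 * 1 * 1 * (βqm * Pm * cm * dm)) /
        (1 * 1 * 1 * 1 *
          (Qm * am * (bm * (1 - b * Y) / (1 - b)) * (gm * (1 - g * Y) / (1 - g)))) = 0 := by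
  have hpre : a - b * c = a * (1 - β) := by linear_combination hβ
  have hA := termA_frac ((a - b) * (a - c) * (b * c - d)) W 1 Bm 1 Pm 1 cm 1 dm 1 Qm 1 am 1 bm 1 gm
    dqm (1 - d) 1 1 1 1 (1 - d * Y) 1 1 1 (1 - a * Y) (1 - b * Y) 1 (1 - a) (1 - b) hdq
  have hB := termB_frac (a - d) (b * c - a * d) W 1 Bm 1 Pm 1 cm 1 dm 1 Qm 1 am 1 bm 1 gm
    cqm (1 - c) 1 1 1 1 (1 - c * Y) 1 1 1 (1 - a * Y) 1 (1 - g * Y) (1 - a) (1 - b) (1 - g) hcq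
  have hC := termC_frac a (b - d) (c - d) W 1 Bm 1 Pm 1 cm 1 dm 1 Qm 1 am 1 bm 1 gm
    βqm (1 - β) 1 1 (1 - β * Y) 1 1 1 1 1 1 (1 - b * Y) (1 - g * Y) (1 - a) (1 - b) (1 - g) hβq
  have hD := common_denominator ((a - b) * (a - c) * (b * c - d) * (1 - d * Y))
    ((1 - g) * ((b * c - a * d) * (a - d) * (1 - c * Y)))
    ((1 - g) * ((b - d) * (c - d) * a * (1 - β * Y))) 1 1 1 1 (1 - a * Y) 1 (1 - b * Y) 1 (1 - g * Y)
    one_ne_zero one_ne_zero one_ne_zero one_ne_zero one_ne_zero one_ne_zero haY hbY hgY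
  have key : (a - b) * (a - c) * (b * c - d) * (1 - d * Y) * (1 - g * Y)
      - (1 - g) * ((b * c - a * d) * (a - d) * (1 - c * Y)) * (1 - b * Y)
      + (1 - g) * ((b - d) * (c - d) * a * (1 - β * Y)) * (1 - a * Y) = 0 := by
    have e1 : (a - b) * (a - c) * (b * c - d) = -(1 - g) * (a * d * (a + β - (b + c))) := by
      linear_combination (-d * (g - 1)) * hβ - (a - b) * (a - c) * hg
    have e2 : (b * c - a * d) * (a - d) = a * d * (d + g - (a + β)) := by
      linear_combination d * hβ - a * hg
    have e3 : (b - d) * (c - d) * a = a * d * (d + g - (b + c)) := by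
      linear_combination (-a) * hg
    rw [e1, e2, e3]
    linear_combination (1 - g) * a * d * Y ^ 2 *
      ((d + g - (b + c)) * hβ - (a + β - (b + c)) * hg)
  simp only [one_mul, mul_one] at hA hB hC hD ⊢
  rw [hpre, hA, hB, hC, ← mul_sub, ← mul_add, hD, key, zero_div, mul_zero]

lemma split_frac (z x y n1 n2 n3 n4 E1 m1 m2 m3 m4 E2 d1 d2 d3 d4 F1 h1 h2 h3 h4 F2 : ℂ) :
    z * x * y * (n1 * n2 * n3 * n4 * E1 * (m1 * m2 * m3 * m4 * E2)) /
        ((d1 * d2 * d3 * d4 * F1) * (h1 * h2 * h3 * h4 * F2)) =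
      z * (x * y * (E1 * E2) / (F1 * F2)) * (n1 * n2 * n3 * n4 * (m1 * m2 * m3 * m4)) /
        (d1 * d2 * d3 * d4 * (h1 * h2 * h3 * h4)) := by
  ring

lemma separate_frac (z D S x y kE E1 E2 kF F1 F2 Bj Bm Pj Pm cj cm dj dm Qj Qm aj am bj bm
    gj gm : ℂ) :
    z * D * S * (x * y * (kE * E1 * E2) / (kF * F1 * F2)) *
        (Bj * Bm * Pj * Pm * cj * cm * dj * dm) / (Qj * Qm * aj * am * bj * bm * gj * gm) =
      z * (kE / kF) * (D * S) * (x * E1 * (Bj * Pj * cj * dj) / (Qj * aj * bj * gj * F1)) *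
        (y * E2 * (Bm * Pm * cm * dm) / (Qm * am * bm * gm * F2)) := by
  ring

/-! ### The sum -/

lemma sum_range_eq_zero_of_antisymm (t : ℕ → ℂ) (N : ℕ)
    (h : ∀ j m, j + m = N → t j = -t m) : ∑ j ∈ Finset.range (N + 1), t j = 0 := by
  have h1 := Finset.sum_range_reflect t (N + 1)
  have h2 : ∑ j ∈ Finset.range (N + 1), t (N + 1 - 1 - j) =
      -∑ j ∈ Finset.range (N + 1), t j := by
    rw [← Finset.sum_neg_distrib]
    refine Finset.sum_congr rfl fun j hj => h _ _ ?_
    have := Finset.mem_range.1 hj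
    omega
  rw [h2] at h1
  linear_combination (-1 / 2 : ℂ) * h1

/-- Coefficient-of-`z^n` form of the quadratic formula for basic hypergeometric series:
`∑_{k=0}^{n} (A_k - B_k + C_k) = 0`. -/
theorem quadratic_formula_coefficients
    (q a b c d : ℂ) (hq : q ≠ 0) (ha : a ≠ 0) (hb : b ≠ 0) (hc : c ≠ 0) (hd : d ≠ 0)
    (r s : ℕ) (e : Fin r → ℂ) (f : Fin s → ℂ) (n : ℕ)
    (α : ℕ → ℂ)
    (hα : ∀ k : ℕ, α k = ((-1 : ℂ) ^ k * q ^ (k * (k - 1) / 2)) ^ ((s : ℤ) - (r : ℤ)))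
    (A B C : ℕ → ℂ)
    (hA : ∀ k ≤ n, A k =
      (a - b) * (a - c) * (b * c - d) * (1 - d) * α k * α (n + 1 - k) *
        (qPoch q (b * c / a) k * qPoch q (b * c / q ^ 2) k * qPoch q c k * qPoch q (d / q) k *
          (∏ i, qPoch q (e i) k) *
         (qPoch q (b * c / a) (n - k) * qPoch q (b * c) (n - k) * qPoch q c (n - k) *
          qPoch q (d * q) (n - k) * ∏ i, qPoch q (e i * q) (n - k))) /
        ((qPoch q q k * qPoch q (a / q) k * qPoch q (b / q) k * qPoch q (b * c / d) k *
          (∏ i, qPoch q (f i) k)) *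
         (qPoch q q (n - k) * qPoch q (a * q) (n - k) * qPoch q (b * q) (n - k) *
          qPoch q (b * c / d) (n - k) * ∏ i, qPoch q (f i * q) (n - k))))
    (hB : ∀ k ≤ n, B k =
      (a - d) * (1 - b) * (1 - c) * (b * c - a * d) * α k * α (n + 1 - k) *
        (qPoch q (b * c / a) k * qPoch q (b * c / q ^ 2) k * qPoch q (c / q) k * qPoch q d k *
          (∏ i, qPoch q (e i) k) *
         (qPoch q (b * c / a) (n - k) * qPoch q (b * c) (n - k) * qPoch q (c * q) (n - k) *
          qPoch q d (n - k) * ∏ i, qPoch q (e i * q) (n - k))) /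
        ((qPoch q q k * qPoch q (a / q) k * qPoch q b k * qPoch q (b * c / (d * q)) k *
          (∏ i, qPoch q (f i) k)) *
         (qPoch q q (n - k) * qPoch q (a * q) (n - k) * qPoch q b (n - k) *
          qPoch q (b * c * q / d) (n - k) * ∏ i, qPoch q (f i * q) (n - k))))
    (hC : ∀ k ≤ n, C k =
      (1 - a) * (b - d) * (c - d) * (a - b * c) * α k * α (n + 1 - k) *
        (qPoch q (b * c / (a * q)) k * qPoch q (b * c / q ^ 2) k * qPoch q c k * qPoch q d k *
          (∏ i, qPoch q (e i) k) *
         (qPoch q (b * c * q / a) (n - k) * qPoch q (b * c) (n - k) * qPoch q c (n - k) *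
          qPoch q d (n - k) * ∏ i, qPoch q (e i * q) (n - k))) /
        ((qPoch q q k * qPoch q a k * qPoch q (b / q) k * qPoch q (b * c / (d * q)) k *
          (∏ i, qPoch q (f i) k)) *
         (qPoch q q (n - k) * qPoch q a (n - k) * qPoch q (b * q) (n - k) *
          qPoch q (b * c * q / d) (n - k) * ∏ i, qPoch q (f i * q) (n - k))))
    (hden : ∀ k ≤ n,
      qPoch q q k ≠ 0 ∧ qPoch q (a / q) k ≠ 0 ∧ qPoch q (b / q) k ≠ 0 ∧
      qPoch q (b * c / d) k ≠ 0 ∧ qPoch q (a * q) k ≠ 0 ∧ qPoch q (b * q) k ≠ 0 ∧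
      qPoch q a k ≠ 0 ∧ qPoch q b k ≠ 0 ∧ qPoch q (b * c / (d * q)) k ≠ 0 ∧
      qPoch q (b * c * q / d) k ≠ 0 ∧
      (∀ i, qPoch q (f i) k ≠ 0) ∧ (∀ i, qPoch q (f i * q) k ≠ 0)) :
    ∑ k ∈ Finset.range (n + 1), (A k - B k + C k) = 0 := by
  -- for `n = 0` nothing guarantees `1 - a ≠ 0` etc., and the claim is a polynomial identity
  obtain _ | N := n
  · have hA0 := hA 0 le_rfl
    have hB0 := hB 0 le_rfl
    have hC0 := hC 0 le_rfl
    simp only [qPoch, Finset.range_zero, Finset.prod_empty, Finset.prod_const_one, Nat.sub_zero,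
      mul_one, div_one] at hA0 hB0 hC0
    simp only [Finset.sum_range_succ, Finset.sum_range_zero, hA0, hB0, hC0]
    ring
  obtain ⟨hQ, haq, hbq, hqg, haq', hbq', hqa, hqb, hgq, hgq', -, -⟩ := hden (N + 1) le_rfl
  -- the partners of `a` and `d` in the pairs with product `b * c`
  obtain ⟨β, hβ⟩ : ∃ β, β = b * c / a := ⟨_, rfl⟩
  obtain ⟨g, hg⟩ : ∃ g, g = b * c / d := ⟨_, rfl⟩
  have r1 : b * c / (a * q) = β / q := by rw [hβ, div_div]
  have r2 : b * c * q / a = β * q := by rw [hβ]; ring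
  have r3 : b * c / (d * q) = g / q := by rw [hg, div_div]
  have r4 : b * c * q / d = g * q := by rw [hg]; ring
  simp only [r1, r2, r3, r4, ← hβ, ← hg] at hA hB hC hgq hqg hgq'
  have hβ' : a * β = b * c := by rw [hβ]; field_simp
  have hg' : d * g = b * c := by rw [hg]; field_simp
  clear hβ hg r1 r2 r3 r4 hden
  have hpq : q⁻¹ * q = 1 := inv_mul_cancel₀ hq
  have h1 : ∀ {u : ℂ}, qPoch q u (N + 1) ≠ 0 → 1 - u ≠ 0 := fun {u} hu => by
    simpa using one_sub_ne_zero_of_qPoch hu (Nat.succ_pos N)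
  have h1a := h1 hqa
  have h1b := h1 hqb
  have h1g := h1 hqg
  have hap := h1 haq
  have hbp := h1 hbq
  have hgp := h1 hgq
  rw [div_eq_mul_inv] at hap hbp hgp
  have h2 : ∀ {u : ℂ}, qPoch q (u * q) (N + 1) ≠ 0 → 1 - u * q ^ (N + 1) ≠ 0 := fun {u} hu => by
    simpa [pow_succ', mul_assoc] using one_sub_ne_zero_of_qPoch hu (Nat.lt_succ_self N)
  have hT0 : A 0 - B 0 + C 0 = 0 := by
    rw [hA _ (Nat.zero_le _), hB _ (Nat.zero_le _), hC _ (Nat.zero_le _), split_frac, split_frac,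
      split_frac, Nat.sub_zero, qPoch_shift_eq h1a, qPoch_shift_eq h1b, qPoch_shift_eq h1g]
    simp only [qPoch_zero]
    exact zero_term a b c d β g (q ^ (N + 1)) (hβ := hβ') (hg := hg')
      (hcq := qPoch_shift q c _) (hdq := qPoch_shift q d _) (hβq := qPoch_shift q β _)
      (haY := h2 haq') (hbY := h2 hbq') (hgY := h2 hgq') ..
  rw [Finset.sum_range_succ', hT0, add_zero]
  -- `σ j` gathers the factors depending on `j` alone; the constants `∏ (1 - e i)`, `∏ (1 - f i)` split
  -- off from `(e i;q)_{j+1}`, `(f i;q)_{j+1}` go into `Z`, which makes the `e`, `f` parts symmetric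
  obtain ⟨σ, hσ⟩ : ∃ σ : ℕ → ℂ, ∀ j, σ j = α (j + 1) * (∏ i, qPoch q (e i * q) j) *
      (qPoch q β j * qPoch q (b * c) j * qPoch q c j * qPoch q d j) /
      (qPoch q q j * qPoch q a (j + 1) * qPoch q b (j + 1) * qPoch q g (j + 1) *
        ∏ i, qPoch q (f i * q) j) := ⟨_, fun _ => rfl⟩
  obtain ⟨Z, hZ⟩ : ∃ Z : ℂ, ∀ j m, j + m = N → A (j + 1) - B (j + 1) + C (j + 1) =
      Z * ((q ^ j - q ^ m) * (1 - b * c * (q ^ j * q ^ m))) * σ j * σ m := by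
    refine ⟨-(a * d * q⁻¹ * (d + g - (b + c)) * (a + β - (b + c)) * (a + β - (d + g))) *
      (1 - a) * (1 - b) * (1 - g) * (1 - b * c * q⁻¹ ^ 2) * (1 - b * c * q⁻¹) /
      ((1 - a * q⁻¹) * (1 - b * q⁻¹) * (1 - g * q⁻¹)) * ((∏ i, (1 - e i)) / ∏ i, (1 - f i)),
      fun j m hjm => ?_⟩
    have hk : j + 1 ≤ N + 1 := by omega
    have i1 : N + 1 - (j + 1) = m := by omega
    have i2 : N + 1 + 1 - (j + 1) = m + 1 := by omega
    have hE : (∏ i, qPoch q (e i) (j + 1)) * (∏ i, qPoch q (e i * q) m) =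
        (∏ i, (1 - e i)) * (∏ i, qPoch q (e i * q) j) * ∏ i, qPoch q (e i * q) m := by
      simp only [qPoch_succ_left, Finset.prod_mul_distrib]
    have hF : (∏ i, qPoch q (f i) (j + 1)) * (∏ i, qPoch q (f i * q) m) =
        (∏ i, (1 - f i)) * (∏ i, qPoch q (f i * q) j) * ∏ i, qPoch q (f i * q) m := by
      simp only [qPoch_succ_left, Finset.prod_mul_distrib]
    have hP : qPoch q (b * c / q ^ 2) (j + 1) = (1 - b * c * q⁻¹ ^ 2) * qPoch q (b * c / q) j := by
      rw [pow_two, ← div_div, qPoch_div_succ hq]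
      congr 2
      ring
    have hN : qPoch q (b * c / q) j * (1 - b * c * q⁻¹ * q ^ j) =
        (1 - b * c * q⁻¹) * qPoch q (b * c) j := by
      rw [← qPoch_div_succ hq, qPoch_succ, div_eq_mul_inv]
    rw [hA _ hk, hB _ hk, hC _ hk, i1, i2, split_frac, split_frac, split_frac, hE, hF, hP,
      qPoch_div_succ hq, qPoch_div_succ hq, qPoch_div_succ hq, qPoch_div_succ hq,
      qPoch_div_succ hq, qPoch_div_succ hq, qPoch_shift_eq h1a, qPoch_shift_eq h1b,
      qPoch_shift_eq h1g]
    rw [qPoch_succ q β, qPoch_succ q c, qPoch_succ q q, qPoch_succ q g, qPoch_succ q b,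
      qPoch_succ q d, qPoch_succ q a]
    rw [generic_term a b c d β g q⁻¹ q (q ^ j) (q ^ m) (hβ := hβ') (hg := hg') (hpq := hpq)
      (hN := hN) (hcq := qPoch_shift q c m) (hdq := qPoch_shift q d m) (hβq := qPoch_shift q β m)
      (hqX := one_sub_ne_zero_of_qPoch hQ (by omega)) (hap := hap) (hbp := hbp) (hgp := hgp)
      (haX := one_sub_ne_zero_of_qPoch hqa (by omega))
      (hbX := one_sub_ne_zero_of_qPoch hqb (by omega))
      (hgX := one_sub_ne_zero_of_qPoch hqg (by omega))
      (haY := one_sub_ne_zero_of_qPoch hqa (by omega))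
      (hbY := one_sub_ne_zero_of_qPoch hqb (by omega))
      (hgY := one_sub_ne_zero_of_qPoch hqg (by omega))]
    simp only [← qPoch_succ]
    rw [separate_frac, hσ, hσ]
  refine sum_range_eq_zero_of_antisymm _ N fun j m hjm => ?_
  rw [hZ j m hjm, hZ m j (by omega)]
  ring
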